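/- Let ℓ : ℝ² → ℝ^{2n} be a C⁴ (e.g. smooth), ℤ²-periodic, isotropic map. Then there exists a constant C > 0 such that for every integer N ≥ 1, every z ∈ ℝ², and each of the two diagonal translation vectors t = (1/N, 1/N) and t = (−1/N, 1/N): |ω(Dᵘ_N(z + t), Dᵛ_N(z + t)) − ω(Dᵘ_N(z), Dᵛ_N(z))| ≤ C · N^{-5}. Consequently the rescaled diagonal finite differences (N/√2)(η_N(z+t) − η_N(z)) of the discrete symplectic density η_N(z) = (N²/2)·ω(Dᵘ_N(z), Dᵛ_N(z)) are bounded by a constant times N^{-2}, uniformly in z and in the direction t; i.e. ‖η_N‖ in the weak discrete C¹-norm is O(N^{-2}). -/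

import Mathlib

/-- The point of `ℝ² = EuclideanSpace ℝ (Fin 2)` with coordinates `(a, b)`. -/
noncomputable def e2 (a b : ℝ) : EuclideanSpace ℝ (Fin 2) :=
  (WithLp.equiv 2 (Fin 2 → ℝ)).symm ![a, b]

/-- The standard symplectic form `ω` on `ℝ^{2n}`:
`ω(u,v) = ∑_{j=0}^{n-1} (u_{2j} v_{2j+1} − u_{2j+1} v_{2j})`. -/
noncomputable def stdSymp (n : ℕ) (u v : EuclideanSpace ℝ (Fin (2 * n))) : ℝ :=
  ∑ j : Fin n,
    (u ⟨2 * j.1, by have := j.2; omega⟩ * v ⟨2 * j.1 + 1, by have := j.2; omega⟩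
      - u ⟨2 * j.1 + 1, by have := j.2; omega⟩ * v ⟨2 * j.1, by have := j.2; omega⟩)

/-- The first diagonal `Dᵘ_N(z) = ℓ(z + (1/N,1/N)) − ℓ(z)` of the sample quadrilateral. -/
noncomputable def Du (n : ℕ) (ℓ : EuclideanSpace ℝ (Fin 2) → EuclideanSpace ℝ (Fin (2 * n)))
    (N : ℕ) (z : EuclideanSpace ℝ (Fin 2)) : EuclideanSpace ℝ (Fin (2 * n)) :=
  ℓ (z + e2 (1 / N) (1 / N)) - ℓ z

/-- The second diagonal `Dᵛ_N(z) = ℓ(z + (0,1/N)) − ℓ(z + (1/N,0))` of the sample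
quadrilateral. -/
noncomputable def Dv (n : ℕ) (ℓ : EuclideanSpace ℝ (Fin 2) → EuclideanSpace ℝ (Fin (2 * n)))
    (N : ℕ) (z : EuclideanSpace ℝ (Fin 2)) : EuclideanSpace ℝ (Fin (2 * n)) :=
  ℓ (z + e2 0 (1 / N)) - ℓ (z + e2 (1 / N) 0)

set_option maxSynthPendingDepth 3

theorem lip_of_fderiv_bound {E G : Type*} [NormedAddCommGroup E] [NormedSpace ℝ E]
    [NormedAddCommGroup G] [NormedSpace ℝ G] {g : E → G} (hg : Differentiable ℝ g) {M : ℝ}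
    (hM : ∀ x, ‖fderiv ℝ g x‖ ≤ M) (x y : E) : ‖g y - g x‖ ≤ M * ‖y - x‖ :=
  convex_univ.norm_image_sub_le_of_norm_fderiv_le (fun z _ => hg z) (fun z _ => hM z)
    (Set.mem_univ x) (Set.mem_univ y)

/-- Symmetric Taylor estimate. -/
theorem sym_taylor {E G : Type*} [NormedAddCommGroup E] [NormedSpace ℝ E]
    [NormedAddCommGroup G] [NormedSpace ℝ G] {g : E → G} (hg : Differentiable ℝ g)
    (hg1 : Differentiable ℝ (fderiv ℝ g)) (hg2 : Differentiable ℝ (fderiv ℝ (fderiv ℝ g)))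
    {M : ℝ} (hM0 : 0 ≤ M) (hM : ∀ x, ‖fderiv ℝ (fderiv ℝ (fderiv ℝ g)) x‖ ≤ M) (c a : E) :
    ‖g (c + a) - g (c - a) - (2 : ℝ) • fderiv ℝ g c a‖ ≤ 2 * M * ‖a‖ ^ 3 := by
  have hb2 : ∀ b : E, ‖b‖ ≤ ‖a‖ → ‖fderiv ℝ (fderiv ℝ g) (c + b) - fderiv ℝ (fderiv ℝ g) (c - b)‖
      ≤ 2 * M * ‖a‖ := by
    intro b hb
    have h := lip_of_fderiv_bound hg2 hM (c - b) (c + b)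
    have e : c + b - (c - b) = (2 : ℝ) • b := by rw [two_smul]; abel
    rw [e, norm_smul] at h
    norm_num at h
    nlinarith
  have ha : a ∈ Metric.closedBall (0 : E) ‖a‖ := by simp
  have h0 : (0 : E) ∈ Metric.closedBall (0 : E) ‖a‖ := by simp
  have dp : ∀ b : E, HasFDerivAt (fun b : E => c + b) (ContinuousLinearMap.id ℝ E) b :=
    fun b => (hasFDerivAt_id b).const_add c
  have dm : ∀ b : E, HasFDerivAt (fun b : E => c - b) (-ContinuousLinearMap.id ℝ E) b :=
    fun b => (hasFDerivAt_id b).const_sub c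
  have hb1 : ∀ b : E, ‖b‖ ≤ ‖a‖ → ‖fderiv ℝ g (c + b) + fderiv ℝ g (c - b) - (2:ℝ) • fderiv ℝ g c‖
      ≤ 2 * M * ‖a‖ * ‖a‖ := by
    intro b hb
    have hd : ∀ x : E, HasFDerivAt (fun b => fderiv ℝ g (c + b) + fderiv ℝ g (c - b))
        (fderiv ℝ (fderiv ℝ g) (c + x) - fderiv ℝ (fderiv ℝ g) (c - x)) x := by
      intro x
      have h1 := (hg1 (c + x)).hasFDerivAt.comp x (dp x)
      have h2 := (hg1 (c - x)).hasFDerivAt.comp x (dm x)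
      refine (h1.add h2).congr_fderiv ?_
      ext v w
      simp [sub_eq_add_neg]
    have h := (convex_closedBall (0 : E) ‖a‖).norm_image_sub_le_of_norm_hasFDerivWithin_le
      (fun x _ => (hd x).hasFDerivWithinAt)
      (fun x hx => hb2 x (by simpa using hx)) h0 (y := b) (by simpa using hb)
    simp only [add_zero, sub_zero] at h
    rw [two_smul]
    exact h.trans (mul_le_mul_of_nonneg_left hb (by positivity))
  have hd : ∀ x : E, HasFDerivAt (fun b => g (c + b) - g (c - b) - (2:ℝ) • fderiv ℝ g c b)
      (fderiv ℝ g (c + x) + fderiv ℝ g (c - x) - (2:ℝ) • fderiv ℝ g c) x := by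
    intro x
    have h1 := (hg (c + x)).hasFDerivAt.comp x (dp x)
    have h2 := (hg (c - x)).hasFDerivAt.comp x (dm x)
    refine ((h1.sub h2).sub (((2:ℝ) • fderiv ℝ g c).hasFDerivAt)).congr_fderiv ?_
    ext v
    simp
  have h := (convex_closedBall (0 : E) ‖a‖).norm_image_sub_le_of_norm_hasFDerivWithin_le
      (fun x _ => (hd x).hasFDerivWithinAt)
      (fun x hx => hb1 x (by simpa using hx)) h0 ha
  simp only [add_zero, sub_zero, map_zero, smul_zero, sub_self] at h
  calc _ ≤ _ := h
    _ = _ := by ring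

theorem bilin_diff_bound {F : Type*} [NormedAddCommGroup F] [NormedSpace ℝ F]
    (B : F →L[ℝ] F →L[ℝ] ℝ) {p p' q q' : F} {x y u w : ℝ}
    (h1 : ‖p - p'‖ ≤ x) (h2 : ‖q‖ ≤ y) (h3 : ‖p'‖ ≤ u) (h4 : ‖q - q'‖ ≤ w) :
    |B p q - B p' q'| ≤ ‖B‖ * (x * y + u * w) := by
  have hx := (norm_nonneg _).trans h1
  have hu := (norm_nonneg _).trans h3
  have e : B p q - B p' q' = B (p - p') q + B p' (q - q') := by simp
  have a1 : ‖B (p - p') q‖ ≤ ‖B‖ * x * y := (B.le_opNorm₂ _ _).trans (by gcongr)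
  have a2 : ‖B p' (q - q')‖ ≤ ‖B‖ * u * w := (B.le_opNorm₂ _ _).trans (by gcongr)
  rw [e, ← Real.norm_eq_abs]
  refine (norm_add_le _ _).trans ?_
  linarith

theorem core_estimate {E F : Type*} [NormedAddCommGroup E] [NormedSpace ℝ E]
    [NormedAddCommGroup F] [NormedSpace ℝ F] (B : F →L[ℝ] F →L[ℝ] ℝ) (f : E → F)
    (d0 : Differentiable ℝ f) (d1 : Differentiable ℝ (fderiv ℝ f))
    (d2 : Differentiable ℝ (fderiv ℝ (fderiv ℝ f)))
    (d3 : Differentiable ℝ (fderiv ℝ (fderiv ℝ (fderiv ℝ f))))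
    {M : ℝ} (hM0 : 0 ≤ M) (m1 : ∀ x, ‖fderiv ℝ f x‖ ≤ M)
    (m2 : ∀ x, ‖fderiv ℝ (fderiv ℝ f) x‖ ≤ M)
    (m3 : ∀ x, ‖fderiv ℝ (fderiv ℝ (fderiv ℝ f)) x‖ ≤ M)
    (m4 : ∀ x, ‖fderiv ℝ (fderiv ℝ (fderiv ℝ (fderiv ℝ f))) x‖ ≤ M)
    (a b : E) (h : ℝ) (hh : 0 ≤ h) (ha : ‖a‖ ≤ h) (hb : ‖b‖ ≤ h)
    (hiso : ∀ x, B (fderiv ℝ f x a) (fderiv ℝ f x b) = 0) (c t : E) (ht : ‖t‖ ≤ 2 * h) :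
    |B (f (c + t + a) - f (c + t - a)) (f (c + t + b) - f (c + t - b))
      - B (f (c + a) - f (c - a)) (f (c + b) - f (c - b))| ≤ 32 * ‖B‖ * M ^ 2 * h ^ 5 := by
  -- increments
  have inc : ∀ {G : Type _} [NormedAddCommGroup G] [NormedSpace ℝ G] (g : E → G),
      Differentiable ℝ g → (∀ x, ‖fderiv ℝ g x‖ ≤ M) → ∀ x s : E, ‖s‖ ≤ h →
      ‖g (x + s) - g (x - s)‖ ≤ 2 * M * h := by
    intro G _ _ g hg hm x s hs
    have h1 := lip_of_fderiv_bound hg hm (x - s) (x + s)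
    have e : x + s - (x - s) = (2 : ℝ) • s := by rw [two_smul]; abel
    rw [e, norm_smul] at h1
    norm_num at h1
    nlinarith
  have dd : ∀ s x : E, HasFDerivAt (fun x => f (x + s) - f (x - s))
      (fderiv ℝ f (x + s) - fderiv ℝ f (x - s)) x := by
    intro s x
    have h1 := (d0 (x + s)).hasFDerivAt.comp x ((hasFDerivAt_id x).add_const s)
    have h2 := (d0 (x - s)).hasFDerivAt.comp x ((hasFDerivAt_id x).sub_const s)
    refine (h1.sub h2).congr_fderiv ?_
    ext v
    simp
  have ev : ∀ s x : E, HasFDerivAt (fun x => fderiv ℝ f x s)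
      ((fderiv ℝ (fderiv ℝ f) x).flip s) x := by
    intro s x
    refine ((d1 x).hasFDerivAt.clm_apply (hasFDerivAt_const s x)).congr_fderiv ?_
    ext v
    simp
  have hzero : ∀ x v : E, B (fderiv ℝ f x a) (fderiv ℝ (fderiv ℝ f) x v b)
      + B (fderiv ℝ (fderiv ℝ f) x v a) (fderiv ℝ f x b) = 0 := by
    intro x v
    have h1 := B.hasFDerivAt_of_bilinear (ev a x) (ev b x)
    simp only [hiso] at h1
    have h2 := h1.unique (hasFDerivAt_const (0:ℝ) x)
    simpa using congrArg (fun L => L v) h2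
  have hsym : ∀ x v : E, ∀ s : E, ‖s‖ ≤ h → fderiv ℝ (fderiv ℝ f) x v s
      = fderiv ℝ (fderiv ℝ f) x s v := by
    intro x v s _
    have : IsSymmSndFDerivAt ℝ f x :=
      second_derivative_symmetric (fun y => (d0 y).hasFDerivAt) (d1 x).hasFDerivAt |> fun k => k
    exact this v s
  have pw : ∀ s : E, ‖s‖ ≤ h → ‖s‖ ^ 3 ≤ h ^ 3 := fun s hs => by gcongr
  have t0 : ∀ x s : E, ‖s‖ ≤ h →
      ‖f (x + s) - f (x - s) - (2:ℝ) • fderiv ℝ f x s‖ ≤ 2 * M * h ^ 3 := fun x s hs =>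
    (sym_taylor d0 d1 d2 hM0 m3 x s).trans (mul_le_mul_of_nonneg_left (pw s hs) (by positivity))
  have t1 : ∀ x v s : E, ‖s‖ ≤ h →
      ‖(fderiv ℝ f (x + s) - fderiv ℝ f (x - s)) v - (2:ℝ) • fderiv ℝ (fderiv ℝ f) x v s‖
        ≤ 2 * M * h ^ 3 * ‖v‖ := by
    intro x v s hs
    have := (sym_taylor d1 d2 d3 hM0 m4 x s).trans
      (mul_le_mul_of_nonneg_left (pw s hs) (by positivity : 0 ≤ 2 * M))
    have := ContinuousLinearMap.le_of_opNorm_le _ this v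
    rw [hsym x v s hs]
    simpa using this
  have b1 : ∀ x s : E, ‖s‖ ≤ h → ‖(2:ℝ) • fderiv ℝ f x s‖ ≤ 2 * M * h := by
    intro x s hs
    have := (fderiv ℝ f x).le_of_opNorm_le_of_le (m1 x) hs
    rw [norm_smul]; norm_num; linarith
  have b2 : ∀ x v s : E, ‖s‖ ≤ h →
      ‖(2:ℝ) • fderiv ℝ (fderiv ℝ f) x v s‖ ≤ 2 * M * h * ‖v‖ := by
    intro x v s hs
    have h1 := (fderiv ℝ (fderiv ℝ f) x).le_of_opNorm_le (m2 x) v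
    have := (fderiv ℝ (fderiv ℝ f) x v).le_of_opNorm_le_of_le h1 hs
    rw [norm_smul]; norm_num; linarith
  have b3 : ∀ x v s : E, ‖s‖ ≤ h →
      ‖(fderiv ℝ f (x + s) - fderiv ℝ f (x - s)) v‖ ≤ 2 * M * h * ‖v‖ := by
    intro x v s hs
    have h1 := lip_of_fderiv_bound d1 m2 (x - s) (x + s)
    have e : x + s - (x - s) = (2 : ℝ) • s := by rw [two_smul]; abel
    rw [e, norm_smul] at h1
    norm_num at h1
    exact ContinuousLinearMap.le_of_opNorm_le _ (h1.trans (by nlinarith)) v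
  have hd := fun x => B.hasFDerivAt_of_bilinear (dd a x) (dd b x)
  have hbd := fun x => ContinuousLinearMap.opNorm_le_bound
    (B.precompR E (f (x + a) - f (x - a)) (fderiv ℝ f (x + b) - fderiv ℝ f (x - b)) +
      B.precompL E (fderiv ℝ f (x + a) - fderiv ℝ f (x - a)) (f (x + b) - f (x - b)))
    (M := 16 * ‖B‖ * M ^ 2 * h ^ 4) (by positivity) (by
      intro v
      have q1 := bilin_diff_bound B (t0 x a ha) (b3 x v b hb) (b1 x a ha) (t1 x v b hb)
      have q2 := bilin_diff_bound B (t1 x v a ha) (inc f d0 m1 x b hb) (b2 x v a ha) (t0 x b hb)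
      have z := hzero x v
      rw [abs_le] at q1 q2
      simp only [map_smul, smul_apply, smul_eq_mul] at q1 q2
      simp only [add_apply, ContinuousLinearMap.precompR_apply,
        ContinuousLinearMap.precompL_apply, Real.norm_eq_abs]
      change |B (f (x + a) - f (x - a)) ((fderiv ℝ f (x + b) - fderiv ℝ f (x - b)) v) + _| ≤ _
      rw [abs_le]
      constructor <;> nlinarith [q1.1, q1.2, q2.1, q2.2])
  have fin := convex_univ.norm_image_sub_le_of_norm_hasFDerivWithin_le
    (fun x _ => (hd x).hasFDerivWithinAt) (fun x _ => hbd x) (Set.mem_univ c) (Set.mem_univ (c + t))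
  rw [add_sub_cancel_left] at fin
  rw [← Real.norm_eq_abs]
  refine fin.trans ?_
  calc _ ≤ 16 * ‖B‖ * M ^ 2 * h ^ 4 * (2 * h) := by gcongr
    _ = _ := by ring

theorem e2_zero_coord (a b : ℝ) : (e2 a b) 0 = a := by simp [e2]
theorem e2_one_coord (a b : ℝ) : (e2 a b) 1 = b := by simp [e2]

theorem e2_norm_le (a b h : ℝ) (h0 : 0 ≤ h) (hab : a ^ 2 + b ^ 2 ≤ h ^ 2) : ‖e2 a b‖ ≤ h := by
  rw [EuclideanSpace.norm_eq]
  simp only [Fin.sum_univ_two, e2_zero_coord, e2_one_coord, Real.norm_eq_abs, sq_abs]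
  exact Real.sqrt_le_iff.2 ⟨h0, hab⟩

theorem periodic_bdd {G : Type*} [NormedAddCommGroup G] (P : EuclideanSpace ℝ (Fin 2) → G)
    (hc : Continuous P) (hp : ∀ z, ∀ k l : ℤ, P (z + e2 k l) = P z) : ∃ M, ∀ z, ‖P z‖ ≤ M := by
  obtain ⟨M, hM⟩ := (isCompact_closedBall (0 : EuclideanSpace ℝ (Fin 2)) 2).exists_bound_of_continuousOn
    hc.continuousOn
  refine ⟨M, fun z => ?_⟩
  have e : z = e2 (Int.fract (z 0)) (Int.fract (z 1)) + e2 (⌊z 0⌋ : ℤ) (⌊z 1⌋ : ℤ) := by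
    ext i
    fin_cases i <;> simp [e2_zero_coord, e2_one_coord]
  rw [e, hp]
  apply hM
  rw [mem_closedBall_zero_iff]
  apply e2_norm_le _ _ _ (by norm_num)
  nlinarith [Int.fract_nonneg (z 0), Int.fract_lt_one (z 0), Int.fract_nonneg (z 1),
    Int.fract_lt_one (z 1)]

theorem periodic_fderiv {G : Type*} [NormedAddCommGroup G] [NormedSpace ℝ G]
    (P : EuclideanSpace ℝ (Fin 2) → G)
    (hp : ∀ z, ∀ k l : ℤ, P (z + e2 k l) = P z) :
    ∀ z, ∀ k l : ℤ, fderiv ℝ P (z + e2 k l) = fderiv ℝ P z := by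
  intro z k l
  rw [← fderiv_comp_add_right]
  simp only [hp]

/-- The symplectic form as a continuous bilinear map. -/
noncomputable def sympCLM (n : ℕ) :
    EuclideanSpace ℝ (Fin (2 * n)) →L[ℝ] EuclideanSpace ℝ (Fin (2 * n)) →L[ℝ] ℝ :=
  ∑ j : Fin n,
    ((EuclideanSpace.proj (𝕜 := ℝ) (⟨2 * j.1, by have := j.2; omega⟩ : Fin (2 * n))).smulRight
      (EuclideanSpace.proj (𝕜 := ℝ) (⟨2 * j.1 + 1, by have := j.2; omega⟩ : Fin (2 * n)))
    - (EuclideanSpace.proj (𝕜 := ℝ) (⟨2 * j.1 + 1, by have := j.2; omega⟩ : Fin (2 * n))).smulRight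
      (EuclideanSpace.proj (𝕜 := ℝ) (⟨2 * j.1, by have := j.2; omega⟩ : Fin (2 * n))))

theorem sympCLM_apply (n : ℕ) (u v : EuclideanSpace ℝ (Fin (2 * n))) :
    sympCLM n u v = stdSymp n u v := by
  simp [sympCLM, stdSymp, sum_apply]

theorem stdSymp_swap (n : ℕ) (u v : EuclideanSpace ℝ (Fin (2 * n))) :
    stdSymp n u v = - stdSymp n v u := by
  simp only [stdSymp, ← Finset.sum_neg_distrib]
  refine Finset.sum_congr rfl fun j _ => ?_
  ring

set_option maxHeartbeats 1000000 in
/-- For a `C⁴`, `ℤ²`-periodic, isotropic map `ℓ : ℝ² → ℝ^{2n}`, the diagonal finite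
differences of the symplectic area defect `ω(Dᵘ_N, Dᵛ_N)` of the sample quadrilaterals
are `O(N^{-5})` uniformly; hence the discrete symplectic density is `O(N^{-2})` in the
weak discrete `C¹`-norm. -/
theorem discrete_symplectic_density_weak_C1_estimate (n : ℕ)
    (ℓ : EuclideanSpace ℝ (Fin 2) → EuclideanSpace ℝ (Fin (2 * n)))
    (hC4 : ContDiff ℝ 4 ℓ)
    (hper : ∀ (z : EuclideanSpace ℝ (Fin 2)) (k l : ℤ), ℓ (z + e2 k l) = ℓ z)
    (hiso : ∀ z : EuclideanSpace ℝ (Fin 2),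
      stdSymp n (fderiv ℝ ℓ z (e2 1 0)) (fderiv ℝ ℓ z (e2 0 1)) = 0) :
    ∃ C > 0, ∀ (N : ℕ), 1 ≤ N → ∀ z : EuclideanSpace ℝ (Fin 2),
      ∀ t ∈ ({e2 (1 / N) (1 / N), e2 (-(1 / N)) (1 / N)} :
          Set (EuclideanSpace ℝ (Fin 2))),
        |stdSymp n (Du n ℓ N (z + t)) (Dv n ℓ N (z + t))
            - stdSymp n (Du n ℓ N z) (Dv n ℓ N z)| ≤ C / (N : ℝ) ^ 5 := by
  have c1 : ContDiff ℝ 3 (fderiv ℝ ℓ) := hC4.fderiv_right (by norm_num)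
  have c2 : ContDiff ℝ 2 (fderiv ℝ (fderiv ℝ ℓ)) := c1.fderiv_right (by norm_num)
  have c3 : ContDiff ℝ 1 (fderiv ℝ (fderiv ℝ (fderiv ℝ ℓ))) := c2.fderiv_right (by norm_num)
  have c4 : Continuous (fderiv ℝ (fderiv ℝ (fderiv ℝ (fderiv ℝ ℓ)))) :=
    c3.continuous_fderiv (by norm_num)
  have p1 := periodic_fderiv _ hper
  have p2 := periodic_fderiv _ p1
  have p3 := periodic_fderiv _ p2
  have p4 := periodic_fderiv _ p3
  obtain ⟨M1, m1⟩ := periodic_bdd _ c1.continuous p1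
  obtain ⟨M2, m2⟩ := periodic_bdd _ c2.continuous p2
  obtain ⟨M3, m3⟩ := periodic_bdd _ c3.continuous p3
  obtain ⟨M4, m4⟩ := periodic_bdd _ c4 p4
  have n1 := (norm_nonneg _).trans (m1 0)
  have n2 := (norm_nonneg _).trans (m2 0)
  have n3 := (norm_nonneg _).trans (m3 0)
  have n4 := (norm_nonneg _).trans (m4 0)
  set M := M1 + M2 + M3 + M4 with hM
  have hM0 : 0 ≤ M := by positivity
  refine ⟨32 * ‖sympCLM n‖ * M ^ 2 + 1, by positivity, ?_⟩
  intro N hN z t ht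
  have hN0 : (0 : ℝ) < N := by exact_mod_cast hN
  obtain ⟨h, hh⟩ : ∃ h : ℝ, h = 1 / (N : ℝ) := ⟨_, rfl⟩
  have hpos : 0 < h := by rw [hh]; positivity
  have hiso' : ∀ x, sympCLM n (fderiv ℝ ℓ x (e2 (h / 2) (h / 2)))
      (fderiv ℝ ℓ x (e2 (-(h / 2)) (h / 2))) = 0 := by
    intro x
    have ea : e2 (h / 2) (h / 2) = (h / 2) • e2 1 0 + (h / 2) • e2 0 1 := by
      ext i; fin_cases i <;> simp [e2_zero_coord, e2_one_coord]
    have eb : e2 (-(h / 2)) (h / 2) = -(h / 2) • e2 1 0 + (h / 2) • e2 0 1 := by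
      ext i; fin_cases i <;> simp [e2_zero_coord, e2_one_coord]
    have s1 := stdSymp_swap n (fderiv ℝ ℓ x (e2 1 0)) (fderiv ℝ ℓ x (e2 1 0))
    have s2 := stdSymp_swap n (fderiv ℝ ℓ x (e2 0 1)) (fderiv ℝ ℓ x (e2 0 1))
    have s3 := stdSymp_swap n (fderiv ℝ ℓ x (e2 0 1)) (fderiv ℝ ℓ x (e2 1 0))
    rw [hiso x] at s3
    have s1' : stdSymp n (fderiv ℝ ℓ x (e2 1 0)) (fderiv ℝ ℓ x (e2 1 0)) = 0 := by linarith
    have s2' : stdSymp n (fderiv ℝ ℓ x (e2 0 1)) (fderiv ℝ ℓ x (e2 0 1)) = 0 := by linarith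
    rw [ea, eb]
    simp only [map_add, map_smul, add_apply, smul_apply,
      sympCLM_apply, smul_eq_mul, hiso x, s1', s2', s3]
    ring
  have htn : ‖t‖ ≤ 2 * h := by
    simp only [Set.mem_insert_iff, Set.mem_singleton_iff, ← hh] at ht
    rcases ht with rfl | rfl <;> apply e2_norm_le <;> nlinarith
  have key := core_estimate (sympCLM n) ℓ (hC4.differentiable (by norm_num))
    (c1.differentiable (by norm_num)) (c2.differentiable (by norm_num))
    (c3.differentiable (by norm_num)) hM0 (fun x => (m1 x).trans (by linarith))
    (fun x => (m2 x).trans (by linarith)) (fun x => (m3 x).trans (by linarith))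
    (fun x => (m4 x).trans (by linarith)) (e2 (h / 2) (h / 2)) (e2 (-(h / 2)) (h / 2)) h hpos.le
    (e2_norm_le _ _ _ hpos.le (by nlinarith)) (e2_norm_le _ _ _ hpos.le (by nlinarith)) hiso'
    (z + e2 (h / 2) (h / 2)) t htn
  have g1 : ∀ w, Du n ℓ N w = ℓ (w + e2 (h / 2) (h / 2) + e2 (h / 2) (h / 2))
      - ℓ (w + e2 (h / 2) (h / 2) - e2 (h / 2) (h / 2)) := by
    intro w
    rw [Du, ← hh]
    congr 2
    · ext i; fin_cases i <;> simp [e2_zero_coord, e2_one_coord] <;> ring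
    · simp
  have g2 : ∀ w, Dv n ℓ N w = ℓ (w + e2 (h / 2) (h / 2) + e2 (-(h / 2)) (h / 2))
      - ℓ (w + e2 (h / 2) (h / 2) - e2 (-(h / 2)) (h / 2)) := by
    intro w
    rw [Dv, ← hh]
    congr 2
    · ext i; fin_cases i <;> simp [e2_zero_coord, e2_one_coord] <;> ring
    · ext i; fin_cases i <;> simp [e2_zero_coord, e2_one_coord] <;> ring
  rw [add_right_comm z (e2 (h / 2) (h / 2)) t, ← g1, ← g1, ← g2, ← g2, sympCLM_apply,
    sympCLM_apply] at key
  refine key.trans ?_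
  have e5 : h ^ 5 = 1 / (N : ℝ) ^ 5 := by rw [hh]; simp
  rw [e5, mul_one_div]
  gcongr
  linarith
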